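/- Let 𝓕 be a uniformly Lipschitz family of maps between metric spaces with λ = sup_{F∈𝓕} Lip(F) ∈ (0,∞). If limsup_n a_n(𝓕) > 0, then 𝓕 factors the Hamming cubes, and moreover c(𝓕) = lim_n a_n(𝓕) (this limit exists). -/

import Mathlib

/-!
Let `α = inf_{n ≥ 1} a_n`.

*The limit exists.* Given `f` on the `n`-cube, split the coordinates into `m` blocks of almost equal
size and restrict `f` to the `m`-dimensional subcubes `s ↦ f (ε + (s constant on blocks))`. Averaging
over `ε` gives `a_n ≤ a_m (1 + m / n)` (`aConst_mul_le`), so `a_n → α` (`aConst_tendsto`), and the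
hypothesis says `α > 0`.

*Every admissible `c` satisfies `c ≤ a_n`.* Test the inequality defining `a_n` on the embeddings
(`le_aConst_of_factors`).

*The constant `α` is admissible* (`factors_of_inf`). For `f` on a cube of dimension `N`, let
`x(v)` and `y(v)` be the averages over `ε` of `d_X(f ε, f (ε + v))` and
`d_Y(F f ε, F f (ε + v))` (`mdist`). Both are subadditive in `v`; if `f` is `C`-Lipschitz for the
unnormalized Hamming metric, `x(v) ≤ C |v|` and `y(v) ≤ a_{|v|} C |v|`. Take
`N = q m k` with `k` huge and `f` nearly extremal for `a_N`, and cut the coordinates into `q`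
superblocks of `m` blocks of size `k`. Each function
`ε ↦ d(f (ε + v), f (ε + w))` changes by `O(C)` along edges, so by the Efron–Stein inequality
(`variance_bound`) there is one `ε` at which all distances between points of the `q m`-dimensional
block subcube are close to their means (`exists_block_subcube`). Near-extremality
and `a_t ≈ α` for `t ≥ k` force `y(v) ≈ α C |v|` for all unions `v` of blocks, by subadditivity.
If `x` were well below its maximal value on every superblock, the induced map on the `q`-cube would
have too small a Lipschitz constant for `a_q ≈ α`; hence some superblock `T` has
`x(T) ≈ C |T|`, and subadditivity gives `x(v) ≈ C |v|` for all unions `v` of blocks of `T`. The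
`m`-dimensional block subcube in `T` is the required almost isometric copy.
-/

open Finset

noncomputable section

/-- Normalized Hamming distance on the cube `{±1}^n` (modeled as `Fin n → Bool`). -/
def hdist (n : ℕ) (ε δ : Fin n → Bool) : ℝ :=
  ((Finset.univ.filter fun i => ε i ≠ δ i).card : ℝ) / n

/-- `-ε`: flip all coordinates. -/
def negCube {n : ℕ} (ε : Fin n → Bool) : Fin n → Bool := fun i => !(ε i)

/-- `d_i ε`: flip the `i`-th coordinate. -/
def flipCoord {n : ℕ} (i : Fin n) (ε : Fin n → Bool) : Fin n → Bool :=
  Function.update ε i (!(ε i))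

/-- Expectation with respect to the uniform probability measure on the cube. -/
def cubeE (n : ℕ) (Φ : (Fin n → Bool) → ℝ) : ℝ :=
  (∑ ε : Fin n → Bool, Φ ε) / 2 ^ n

/-- Lipschitz constant of a map from the cube (with metric `hdist`) into a metric space,
with the convention `0 / 0 = 0`. -/
def cubeLip {n : ℕ} {X : Type} [MetricSpace X] (f : (Fin n → Bool) → X) : ℝ :=
  sSup { r : ℝ | ∃ ε δ, r = dist (f ε) (f δ) / hdist n ε δ }

/-- A map between (bundled) metric spaces. -/
structure MetricMap where
  X : Type
  Y : Type
  mX : MetricSpace X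
  mY : MetricSpace Y
  F : X → Y

attribute [instance] MetricMap.mX MetricMap.mY

/-- `a_n(𝓕)`: infimum of those `a > 0` such that for each `F : X → Y` in `𝓕` and each
`f : 2^n → X`, `𝔼 ϱ_Y^f(ε,−ε) ≤ a·Lip(f)`. -/
def aConst (𝓕 : Set MetricMap) (n : ℕ) : ℝ :=
  sInf { a : ℝ | 0 < a ∧ ∀ G ∈ 𝓕, ∀ f : (Fin n → Bool) → G.X,
    cubeE n (fun ε => dist (G.F (f ε)) (G.F (f (negCube ε)))) ≤ a * cubeLip f }

/-- `b_{p,n}(𝓕)`: infimum of those `b > 0` such that for each `F : X → Y` in `𝓕` and each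
`f : 2^n → X`, `𝔼 ϱ_Y^f(ε,−ε)^p ≤ b^p n^{p−1} ∑_i 𝔼 ϱ_X^f(ε,d_iε)^p`. -/
def bConst (𝓕 : Set MetricMap) (p : ℝ) (n : ℕ) : ℝ :=
  sInf { b : ℝ | 0 < b ∧ ∀ G ∈ 𝓕, ∀ f : (Fin n → Bool) → G.X,
    cubeE n (fun ε => dist (G.F (f ε)) (G.F (f (negCube ε))) ^ p)
      ≤ b ^ p * (n : ℝ) ^ (p - 1) *
        ∑ i : Fin n, cubeE n (fun ε => dist (f ε) (f (flipCoord i ε)) ^ p) }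

/-- `𝓕` factors the Hamming cubes. -/
def FactorsHammingCubes (𝓕 : Set MetricMap) : Prop :=
  ∃ c : ℝ, 0 < c ∧ ∀ D : ℝ, 1 < D → ∀ n : ℕ, 0 < n →
    ∃ G ∈ 𝓕, ∃ f : (Fin n → Bool) → G.X, ∃ a b : ℝ, 0 < a ∧ 0 < b ∧ a * c ≤ b ∧
      ∀ ε δ : Fin n → Bool,
        a / D * hdist n ε δ ≤ dist (f ε) (f δ) ∧
        dist (f ε) (f δ) ≤ a * D * hdist n ε δ ∧
        b / D * hdist n ε δ ≤ dist (G.F (f ε)) (G.F (f δ)) ∧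
        dist (G.F (f ε)) (G.F (f δ)) ≤ b * D * hdist n ε δ

/-- `c(𝓕)`: the supremum of those `c > 0` witnessing the factorization of the Hamming cubes
(`sSup ∅ = 0` in `ℝ`, matching the convention `c(𝓕) = 0` if no such `c` exists). -/
def cConst (𝓕 : Set MetricMap) : ℝ :=
  sSup { c : ℝ | 0 < c ∧ ∀ D : ℝ, 1 < D → ∀ n : ℕ, 0 < n →
    ∃ G ∈ 𝓕, ∃ f : (Fin n → Bool) → G.X, ∃ a b : ℝ, 0 < a ∧ 0 < b ∧ a * c ≤ b ∧
      ∀ ε δ : Fin n → Bool,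
        a / D * hdist n ε δ ≤ dist (f ε) (f δ) ∧
        dist (f ε) (f δ) ≤ a * D * hdist n ε δ ∧
        b / D * hdist n ε δ ≤ dist (G.F (f ε)) (G.F (f δ)) ∧
        dist (G.F (f ε)) (G.F (f δ)) ≤ b * D * hdist n ε δ }

open scoped BigOperators

/-! ### The cube as a group and mean displacements -/

/-- Coordinatewise xor: the group law of the cube `(ℤ/2)^ι`. -/
def cx {ι : Type} (ε v : ι → Bool) : ι → Bool := fun i => xor (ε i) (v i)

/-- Hamming weight of a point of the cube. -/
def wt {ι : Type} [Fintype ι] (v : ι → Bool) : ℕ := (univ.filter fun i => v i = true).card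

/-- The all-ones vector; translating by it is `ε ↦ -ε`. -/
def ones (ι : Type) : ι → Bool := fun _ => true

/-- The indicator vector of the coordinate `i`; translating by it flips that coordinate. -/
def single {ι : Type} [DecidableEq ι] (i : ι) : ι → Bool := fun j => decide (j = i)

/-- `f` is `C`-Lipschitz for the unnormalized Hamming metric. -/
def LipC {ι Z : Type} [Fintype ι] [MetricSpace Z] (f : (ι → Bool) → Z) (C : ℝ) : Prop :=
  ∀ ε δ, dist (f ε) (f δ) ≤ C * wt (cx ε δ)

/-- The mean displacement of `f` under translation by `v`. -/
def mdist {ι Z : Type} [Fintype ι] [DecidableEq ι] [MetricSpace Z] (f : (ι → Bool) → Z)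
    (v : ι → Bool) : ℝ :=
  𝔼 ε, dist (f ε) (f (cx ε v))

set_option linter.unusedSectionVars false

section basics
variable {ι κ : Type}

lemma cx_assoc (a b c : ι → Bool) : cx (cx a b) c = cx a (cx b c) := by
  ext i; simp [cx]

lemma cx_comm (a b : ι → Bool) : cx a b = cx b a := by
  ext i; simp [cx, Bool.xor_comm]

lemma cx_cancel (a b : ι → Bool) : cx (cx a b) b = a := by
  ext i; simp [cx]

lemma cx_cancel_left (a b : ι → Bool) : cx a (cx a b) = b := by
  ext i; simp [cx]

lemma cx_translate (e a b : ι → Bool) : cx (cx e a) (cx e b) = cx a b := by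
  ext i; cases h : e i <;> simp [cx, h]

lemma hdist_eq (n : ℕ) (ε δ : Fin n → Bool) : hdist n ε δ = (wt (cx ε δ) : ℝ) / n := by
  simp [hdist, wt, cx]

lemma negCube_eq {n : ℕ} (ε : Fin n → Bool) : negCube ε = cx ε (ones _) := by
  ext i; simp [negCube, cx, ones]

/-- Translation of the cube, as a permutation. -/
def cxEquiv (v : ι → Bool) : (ι → Bool) ≃ (ι → Bool) where
  toFun ε := cx ε v
  invFun ε := cx ε v
  left_inv ε := cx_cancel ε v
  right_inv ε := cx_cancel ε v

variable [Fintype ι] [DecidableEq ι] [Fintype κ] [DecidableEq κ]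

lemma expect_translate (v : ι → Bool) (Φ : (ι → Bool) → ℝ) :
    𝔼 ε, Φ (cx ε v) = 𝔼 ε, Φ ε :=
  Fintype.expect_equiv (cxEquiv v) _ _ fun _ => rfl

lemma wt_ones : wt (ones ι) = Fintype.card ι := by simp [wt, ones, Finset.card_univ]

lemma wt_single (i : ι) : wt (single i) = 1 := by simp [wt, single, Finset.filter_eq']

lemma wt_eq_zero {v : ι → Bool} (h : wt v = 0) : v = fun _ => false := by
  ext i
  simp only [wt, Finset.card_eq_zero, Finset.filter_eq_empty_iff] at h
  simpa using h (Finset.mem_univ i)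

lemma wt_compl (v : ι → Bool) : wt (cx (ones ι) v) + wt v = Fintype.card ι := by
  have := Finset.card_filter_add_card_filter_not (s := (univ : Finset ι)) (fun i => v i = true)
  simp only [wt, cx, ones]
  rw [← Finset.card_univ, ← this, add_comm]
  congr 2
  ext i; simp

lemma wt_le (v : ι → Bool) : wt v ≤ Fintype.card ι := by
  have := wt_compl v; omega

lemma wt_equiv (e : κ ≃ ι) (v : ι → Bool) : wt (v ∘ e) = wt v := by
  unfold wt
  refine Finset.card_bij (fun a _ => e a) ?_ ?_ ?_
  · simp
  · simp
  · intro b hb; exact ⟨e.symm b, by simpa using hb, by simp⟩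

/-- Pulling back along a map whose fibres have at most `B` points multiplies weights by at
most `B`. -/
lemma wt_comp_le (p : ι → κ) (B : ℕ) (hB : ∀ j, (univ.filter fun i => p i = j).card ≤ B)
    (s : κ → Bool) : wt (s ∘ p) ≤ B * wt s := by
  unfold wt
  refine (Finset.card_le_mul_card_image (f := p) _ B ?_).trans ?_
  · intro j _
    refine le_trans (Finset.card_le_card ?_) (hB j)
    exact Finset.filter_subset_filter _ (Finset.filter_subset _ _)
  · refine Nat.mul_le_mul_left _ (Finset.card_le_card ?_)
    intro j hj
    simp only [Finset.mem_image, Finset.mem_filter, Finset.mem_univ, true_and] at hj ⊢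
    obtain ⟨i, hi, rfl⟩ := hj
    exact hi

variable {Z : Type} [MetricSpace Z]

lemma LipC.nonneg [Nonempty ι] {f : (ι → Bool) → Z} {C : ℝ} (h : LipC f C) : 0 ≤ C := by
  obtain ⟨i⟩ := ‹Nonempty ι›
  have h1 := h (fun _ => false) (single i)
  have h2 : cx (fun _ => false) (single i) = single i := by ext j; simp [cx]
  rw [h2, wt_single] at h1
  have := dist_nonneg.trans h1
  simpa using this

/-- The Hamming metric is a path metric: it suffices to control edges. -/
lemma lipC_of_edges {f : (ι → Bool) → Z} {K : ℝ}
    (h : ∀ i ε, dist (f ε) (f (cx ε (single i))) ≤ K) : LipC f K := by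
  suffices H : ∀ n : ℕ, ∀ ε δ, wt (cx ε δ) = n → dist (f ε) (f δ) ≤ K * n from
    fun ε δ => H _ ε δ rfl
  intro n
  induction n with
  | zero =>
    intro ε δ h0
    have : ε = δ := by
      have h1 := wt_eq_zero h0
      have h2 := cx_cancel ε δ
      rw [h1] at h2
      rw [← h2]; ext i; simp [cx]
    simp [this]
  | succ n ih =>
    intro ε δ hn
    have hne : (univ.filter fun i => cx ε δ i = true).Nonempty := by
      rw [← Finset.card_pos]; unfold wt at hn; omega
    obtain ⟨i, hi⟩ := hne
    have hstep : wt (cx (cx ε (single i)) δ) = n := by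
      have : (univ.filter fun j => cx (cx ε (single i)) δ j = true)
          = (univ.filter fun j => cx ε δ j = true).erase i := by
        ext j
        simp only [Finset.mem_filter, Finset.mem_univ, true_and, Finset.mem_erase] at hi ⊢
        by_cases hj : j = i
        · subst hj
          simp only [cx, single] at hi ⊢
          cases h1 : ε j <;> cases h2 : δ j <;> simp_all
        · simp [cx, single, hj]
      unfold wt at hn ⊢
      rw [this, Finset.card_erase_of_mem hi, hn]; rfl
    have h1 := ih _ _ hstep
    have h2 := dist_triangle (f ε) (f (cx ε (single i))) (f δ)
    have h3 := h i ε
    push_cast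
    linarith

lemma mdist_le {f : (ι → Bool) → Z} {C : ℝ} (h : LipC f C) (v : ι → Bool) :
    mdist f v ≤ C * wt v := by
  refine Finset.expect_le (univ_nonempty) fun ε _ => ?_
  have := h ε (cx ε v)
  rwa [cx_cancel_left] at this

lemma mdist_subadd (f : (ι → Bool) → Z) (v w : ι → Bool) :
    mdist f (cx v w) ≤ mdist f v + mdist f w := by
  unfold mdist
  rw [← expect_translate v (fun ε => dist (f ε) (f (cx ε w))), ← Finset.expect_add_distrib]
  refine Finset.expect_le_expect fun ε _ => ?_
  rw [← cx_assoc]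
  exact dist_triangle _ _ _

lemma mdist_sub (f : (ι → Bool) → Z) (u v : ι → Bool) :
    mdist f u - mdist f (cx u v) ≤ mdist f v := by
  have := mdist_subadd f (cx u v) v
  rw [cx_cancel] at this
  linarith

/-- Averaging identity behind restriction to random subcubes: the mean displacement of `f` along
`v` is the average over base points `ε` of the mean antipodal displacement of
`s ↦ f (ε + P s)`. -/
lemma mdist_pull (f : (ι → Bool) → Z) (v : ι → Bool) (P : (κ → Bool) → (ι → Bool))
    (hP : ∀ s, P (cx s (ones κ)) = cx (P s) v) :
    mdist f v = 𝔼 ε, mdist (fun s => f (cx ε (P s))) (ones κ) := by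
  unfold mdist
  rw [Finset.expect_comm]
  have : ∀ s : κ → Bool, 𝔼 ε, dist (f (cx ε (P s))) (f (cx ε (P (cx s (ones κ)))))
      = 𝔼 ε, dist (f ε) (f (cx ε v)) := by
    intro s
    rw [← expect_translate (P s) (fun ε => dist (f ε) (f (cx ε v)))]
    simp only [hP, cx_assoc]
  simp only [this]
  exact (Fintype.expect_const _).symm

end basics

/-! ### Concentration on the cube -/

lemma expect_cons (n : ℕ) (h : (Fin (n + 1) → Bool) → ℝ) :
    𝔼 ε, h ε = ((𝔼 x, h (Fin.cons false x)) + 𝔼 x, h (Fin.cons true x)) / 2 := by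
  have e : 𝔼 ε, h ε = 𝔼 p : Bool × (Fin n → Bool), h (Fin.cons p.1 p.2) :=
    (Fintype.expect_equiv (Fin.consEquiv fun _ => Bool) _ _ fun _ => rfl).symm
  rw [e, ← Finset.univ_product_univ, Finset.expect_product]
  rw [Fintype.expect_eq_sum_div_card, Fintype.sum_bool, Fintype.card_bool, add_comm]
  norm_num

/-- Efron–Stein (Poincaré) variance bound on the cube. -/
lemma variance_fin (n : ℕ) (h : (Fin n → Bool) → ℝ) (K : ℝ)
    (hK : ∀ i ε, |h (cx ε (single i)) - h ε| ≤ K) :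
    𝔼 ε, h ε ^ 2 - (𝔼 ε, h ε) ^ 2 ≤ n * K ^ 2 / 4 := by
  induction n with
  | zero => simp
  | succ n ih =>
    have hb : ∀ b : Bool, ∀ (i : Fin n) (x : Fin n → Bool),
        |h (Fin.cons b (cx x (single i))) - h (Fin.cons b x)| ≤ K := by
      intro b i x
      have := hK i.succ (Fin.cons b x)
      convert this using 4
      ext j
      refine Fin.cases ?_ (fun j => ?_) j
      · simp [cx, single, (Fin.succ_ne_zero i).symm]
      · simp [cx, single]
    have h0 := ih (fun x => h (Fin.cons false x)) (hb false)
    have h1 := ih (fun x => h (Fin.cons true x)) (hb true)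
    rw [expect_cons n h, expect_cons n (fun ε => h ε ^ 2)]
    have hm : |(𝔼 x : Fin n → Bool, h (Fin.cons true x)) - 𝔼 x : Fin n → Bool, h (Fin.cons false x)|
        ≤ K := by
      rw [← Finset.expect_sub_distrib]
      refine (Finset.abs_expect_le _ _).trans (Finset.expect_le univ_nonempty fun x _ => ?_)
      have e : (Fin.cons true x : Fin (n + 1) → Bool) = cx (Fin.cons false x) (single 0) := by
        ext j
        refine Fin.cases ?_ (fun j => ?_) j
        · simp [cx, single]
        · simp [cx, single]
      rw [e]
      exact hK 0 (Fin.cons false x)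
    have hm2 := sq_le_sq' (abs_le.1 hm).1 (abs_le.1 hm).2
    push_cast
    nlinarith

lemma variance_bound {ι : Type} [Fintype ι] [DecidableEq ι] (h : (ι → Bool) → ℝ) (K : ℝ)
    (hK : ∀ i ε, |h (cx ε (single i)) - h ε| ≤ K) :
    𝔼 ε, (h ε - 𝔼 δ, h δ) ^ 2 ≤ Fintype.card ι * K ^ 2 / 4 := by
  have e := Fintype.equivFin ι
  have tr : ∀ Φ : (ι → Bool) → ℝ, 𝔼 ε, Φ ε = 𝔼 x : Fin (Fintype.card ι) → Bool, Φ (x ∘ e) :=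
    fun Φ => (Fintype.expect_equiv (Equiv.arrowCongr e.symm (Equiv.refl Bool)) _ _
      fun x => rfl).symm
  have key := variance_fin _ (fun x => h (x ∘ e)) K (by
    intro i x
    have := hK (e.symm i) (x ∘ e)
    convert this using 4
    ext j
    simp [cx, single, Equiv.eq_symm_apply])
  rw [← tr h, ← tr (fun ε => h ε ^ 2)] at key
  set μ := 𝔼 δ, h δ
  have : 𝔼 ε, (h ε - μ) ^ 2 = 𝔼 ε, h ε ^ 2 - μ ^ 2 := by
    have e1 : ∀ ε, (h ε - μ) ^ 2 = h ε ^ 2 - (2 * μ * h ε - μ ^ 2) := fun ε => by ring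
    simp only [e1]
    rw [Finset.expect_sub_distrib, Finset.expect_sub_distrib, ← Finset.mul_expect,
      Fintype.expect_const]
    change _ - (2 * μ * μ - _) = _
    ring
  rw [this]; exact key

/-- Finitely many functions with small differences along edges are simultaneously close to
their means at some point of the cube. -/
lemma exists_concentrated {ι J : Type} [Fintype ι] [DecidableEq ι] [Fintype J]
    (h : J → (ι → Bool) → ℝ) (K t : ℝ) (ht : 0 < t)
    (hK : ∀ j i ε, |h j (cx ε (single i)) - h j ε| ≤ K)
    (hsmall : Fintype.card J * (Fintype.card ι * K ^ 2 / 4) < t ^ 2) :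
    ∃ ε, ∀ j, |h j ε - 𝔼 δ, h j δ| ≤ t := by
  have h1 : 𝔼 ε, ∑ j, (h j ε - 𝔼 δ, h j δ) ^ 2 < t ^ 2 := by
    rw [Finset.expect_sum_comm]
    refine lt_of_le_of_lt (Finset.sum_le_sum fun j _ => variance_bound (h j) K (hK j)) ?_
    simpa using hsmall
  obtain ⟨ε, -, hε⟩ := Finset.exists_lt_of_expect_lt univ_nonempty h1
  refine ⟨ε, fun j => abs_le_of_sq_le_sq ?_ ht.le⟩
  exact (Finset.single_le_sum (f := fun j => (h j ε - 𝔼 δ, h j δ) ^ 2)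
    (fun _ _ => sq_nonneg _) (Finset.mem_univ j)).trans hε.le

/-! ### The constants `a_n` -/

section constants

lemma cubeE_eq {n : ℕ} {Z : Type} [MetricSpace Z] (f : (Fin n → Bool) → Z) :
    cubeE n (fun ε => dist (f ε) (f (negCube ε))) = mdist f (ones _) := by
  simp [cubeE, mdist, Fintype.expect_eq_sum_div_card, negCube_eq]

lemma cubeLip_bdd {n : ℕ} {X : Type} [MetricSpace X] (f : (Fin n → Bool) → X) :
    BddAbove { r : ℝ | ∃ ε δ, r = dist (f ε) (f δ) / hdist n ε δ } := by
  have : { r : ℝ | ∃ ε δ, r = dist (f ε) (f δ) / hdist n ε δ } =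
      Set.range (fun p : (Fin n → Bool) × (Fin n → Bool) =>
        dist (f p.1) (f p.2) / hdist n p.1 p.2) := by
    ext r
    constructor
    · rintro ⟨ε, δ, rfl⟩; exact ⟨(ε, δ), rfl⟩
    · rintro ⟨⟨ε, δ⟩, rfl⟩; exact ⟨ε, δ, rfl⟩
  rw [this]
  exact (Set.finite_range _).bddAbove

lemma cubeLip_nonneg {n : ℕ} {X : Type} [MetricSpace X] (f : (Fin n → Bool) → X) :
    0 ≤ cubeLip f :=
  le_csSup (cubeLip_bdd f) ⟨fun _ => false, fun _ => false, by simp⟩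

lemma lipC_cubeLip {n : ℕ} (hn : 0 < n) {X : Type} [MetricSpace X] (f : (Fin n → Bool) → X) :
    LipC f (cubeLip f / n) := by
  intro ε δ
  have hn' : (0 : ℝ) < n := by exact_mod_cast hn
  have h1 : dist (f ε) (f δ) / hdist n ε δ ≤ cubeLip f := le_csSup (cubeLip_bdd f) ⟨ε, δ, rfl⟩
  rcases Nat.eq_zero_or_pos (wt (cx ε δ)) with h0 | h0
  · have e := wt_eq_zero h0
    have : ε = δ := by
      have h2 := cx_cancel ε δ
      rw [e] at h2
      rw [← h2]; ext i; simp [cx]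
    subst this
    simp only [dist_self]
    exact mul_nonneg (div_nonneg (cubeLip_nonneg f) hn'.le) (Nat.cast_nonneg _)
  · have h0' : (0 : ℝ) < wt (cx ε δ) := by exact_mod_cast h0
    rw [hdist_eq, div_le_iff₀ (by positivity)] at h1
    calc _ ≤ _ := h1
      _ = _ := by ring

lemma cubeLip_le {n : ℕ} (hn : 0 < n) {X : Type} [MetricSpace X] {f : (Fin n → Bool) → X}
    {C : ℝ} (h : LipC f C) : cubeLip f ≤ C * n := by
  have hn' : (0 : ℝ) < n := by exact_mod_cast hn
  have : Nonempty (Fin n) := ⟨⟨0, hn⟩⟩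
  have hC := h.nonneg
  refine csSup_le ⟨_, fun _ => false, fun _ => false, rfl⟩ ?_
  rintro r ⟨ε, δ, rfl⟩
  rw [hdist_eq]
  refine div_le_of_le_mul₀ (by positivity) (by positivity) ?_
  calc _ ≤ _ := h ε δ
    _ = _ := by field_simp

lemma aConst_nonneg (𝓕 : Set MetricMap) (n : ℕ) : 0 ≤ aConst 𝓕 n :=
  Real.sInf_nonneg fun _ ha => ha.1.le

lemma LipC.map {ι : Type} [Fintype ι] {X Y : Type} [MetricSpace X] [MetricSpace Y] {F : X → Y}
    {lam : ℝ} (hlam : 0 < lam) (hF : ∀ x y, dist (F x) (F y) ≤ lam * dist x y)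
    {f : (ι → Bool) → X} {C : ℝ} (h : LipC f C) : LipC (F ∘ f) (lam * C) := by
  intro ε δ
  calc _ ≤ lam * dist (f ε) (f δ) := hF _ _
    _ ≤ lam * (C * wt (cx ε δ)) := mul_le_mul_of_nonneg_left (h ε δ) hlam.le
    _ = _ := by ring

lemma mdist_ones_equiv {ι κ : Type} [Fintype ι] [DecidableEq ι] [Fintype κ] [DecidableEq κ]
    {Z : Type} [MetricSpace Z] (e : ι ≃ κ) (f : (ι → Bool) → Z) :
    mdist (fun x : κ → Bool => f (x ∘ e)) (ones κ) = mdist f (ones ι) :=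
  Fintype.expect_equiv (Equiv.arrowCongr e.symm (Equiv.refl Bool)) _ _ fun _ => rfl

lemma LipC.equiv {ι κ : Type} [Fintype ι] [DecidableEq ι] [Fintype κ] [DecidableEq κ]
    {Z : Type} [MetricSpace Z] (e : ι ≃ κ) {f : (ι → Bool) → Z} {C : ℝ} (h : LipC f C) :
    LipC (fun x : κ → Bool => f (x ∘ e)) C := by
  intro ε δ
  have := h (ε ∘ e) (δ ∘ e)
  have e2 : cx (ε ∘ e) (δ ∘ e) = cx ε δ ∘ e := rfl
  rwa [e2, wt_equiv] at this

variable {𝓕 : Set MetricMap} {lam : ℝ}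

/-- The inequality defining `a_n`, for cubes over an arbitrary index type with `n` elements. The
infimum defining `a_n` is over a nonempty set because of the uniform Lipschitz bound. -/
lemma mdist_le_aConst (hlam : 0 < lam)
    (hLip : ∀ G ∈ 𝓕, ∀ x y : G.X, dist (G.F x) (G.F y) ≤ lam * dist x y)
    {κ : Type} [Fintype κ] [DecidableEq κ] [Nonempty κ] {G : MetricMap} (hG : G ∈ 𝓕)
    {f : (κ → Bool) → G.X} {C : ℝ} (h : LipC f C) :
    mdist (G.F ∘ f) (ones κ) ≤ aConst 𝓕 (Fintype.card κ) * (C * Fintype.card κ) := by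
  have hn : 0 < Fintype.card κ := Fintype.card_pos
  have hC := h.nonneg
  set n := Fintype.card κ with hndef
  have e : κ ≃ Fin n := Fintype.equivFin κ
  rw [← mdist_ones_equiv e]
  have hLf := h.equiv e
  set f' : (Fin n → Bool) → G.X := fun x => f (x ∘ e)
  change mdist (G.F ∘ f') _ ≤ _
  have hcl := cubeLip_le hn hLf
  have hS : ∀ a ∈ { a : ℝ | 0 < a ∧ ∀ G ∈ 𝓕, ∀ f : (Fin n → Bool) → G.X,
      cubeE n (fun ε => dist (G.F (f ε)) (G.F (f (negCube ε)))) ≤ a * cubeLip f },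
      mdist (G.F ∘ f') (ones _) ≤ a * (C * n) := by
    rintro a ⟨ha, h1⟩
    rw [← cubeE_eq]
    exact (h1 G hG f').trans (mul_le_mul_of_nonneg_left hcl ha.le)
  have hlamS : lam ∈ { a : ℝ | 0 < a ∧ ∀ G ∈ 𝓕, ∀ f : (Fin n → Bool) → G.X,
      cubeE n (fun ε => dist (G.F (f ε)) (G.F (f (negCube ε)))) ≤ a * cubeLip f } := by
    refine ⟨hlam, fun G hG f => ?_⟩
    have h2 := mdist_le ((lipC_cubeLip hn f).map hlam (hLip G hG)) (ones _)
    rw [← cubeE_eq, wt_ones, Fintype.card_fin] at h2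
    have hn' : (n : ℝ) ≠ 0 := by exact_mod_cast hn.ne'
    calc _ ≤ _ := h2
      _ = _ := by field_simp
  rcases hC.eq_or_lt with h0 | h0
  · have := hS _ hlamS
    simpa [← h0] using this
  · have hpos : 0 < C * n := by positivity
    rw [← div_le_iff₀ hpos]
    exact le_csInf ⟨_, hlamS⟩ fun a ha => (div_le_iff₀ hpos).2 (hS a ha)

/-- Near-extremal maps for `a_n`. -/
lemma exists_near_extremal {ι : Type} [Fintype ι] [DecidableEq ι] [Nonempty ι] {r : ℝ}
    (hr : 0 < r) (hra : r < aConst 𝓕 (Fintype.card ι)) :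
    ∃ G ∈ 𝓕, ∃ f : (ι → Bool) → G.X, ∃ C : ℝ, 0 < C ∧ LipC f C ∧
      r * (C * Fintype.card ι) < mdist (G.F ∘ f) (ones ι) := by
  have hn : 0 < Fintype.card ι := Fintype.card_pos
  set n := Fintype.card ι with hndef
  have e : ι ≃ Fin n := Fintype.equivFin ι
  have hn' : (0 : ℝ) < n := by exact_mod_cast hn
  have hnot := notMem_of_lt_csInf hra ⟨0, fun a ha => ha.1.le⟩
  simp only [Set.mem_ofPred_eq, not_and, not_forall, not_le] at hnot
  obtain ⟨G, hG, f, hf⟩ := hnot hr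
  have hl := lipC_cubeLip hn f
  have hcE := cubeE_eq (G.F ∘ f)
  simp only [Function.comp] at hcE
  rw [hcE] at hf
  refine ⟨G, hG, fun x => f (x ∘ e.symm), cubeLip f / n, ?_, hl.equiv e.symm, ?_⟩
  · rcases (cubeLip_nonneg f).eq_or_lt with h0 | h0
    · -- a map with vanishing Lipschitz constant is constant, so it has no displacement
      exfalso
      have hc : ∀ ε δ, f ε = f δ := by
        intro ε δ
        have := hl ε δ
        rw [← h0] at this
        simpa using this
      rw [← h0, mul_zero] at hf
      unfold mdist at hf
      simp [hc _ (fun _ => false)] at hf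
    · positivity
  · have h3 := mdist_ones_equiv e.symm (G.F ∘ f)
    have h4 : G.F ∘ (fun x : ι → Bool => f (x ∘ e.symm)) = fun x => (G.F ∘ f) (x ∘ e.symm) := rfl
    rw [h4, h3, div_mul_cancel₀ _ hn'.ne']
    exact hf

/-- The mean displacement along `v` is controlled by `a_{|v|}`, `|v|` being the weight of `v`:
restrict `f` to the subcubes whose free coordinates form the support of `v`. -/
lemma mdist_le_aConst_wt (hlam : 0 < lam)
    (hLip : ∀ G ∈ 𝓕, ∀ x y : G.X, dist (G.F x) (G.F y) ≤ lam * dist x y)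
    {ι : Type} [Fintype ι] [DecidableEq ι] {G : MetricMap} (hG : G ∈ 𝓕)
    {f : (ι → Bool) → G.X} {C : ℝ} (h : LipC f C) (v : ι → Bool) :
    mdist (G.F ∘ f) v ≤ aConst 𝓕 (wt v) * (C * wt v) := by
  rcases Nat.eq_zero_or_pos (wt v) with h0 | h0
  · rw [wt_eq_zero h0]
    have : ∀ ε : ι → Bool, cx ε (fun _ => false) = ε := fun ε => by ext i; simp [cx]
    simp [mdist, this, wt]
  · have hcard : Fintype.card {i // v i = true} = wt v := by
      rw [Fintype.card_subtype]; rfl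
    have : Nonempty {i // v i = true} := Fintype.card_pos_iff.1 (by omega)
    set P : ({i // v i = true} → Bool) → (ι → Bool) :=
      fun s i => if hi : v i = true then s ⟨i, hi⟩ else false with hP
    rw [mdist_pull (G.F ∘ f) v P]
    · refine Finset.expect_le univ_nonempty fun ε _ => ?_
      rw [← hcard]
      refine mdist_le_aConst hlam hLip hG (f := fun s => f (cx ε (P s))) ?_
      intro s s'
      refine (h _ _).trans ?_
      rw [cx_translate]
      have : Nonempty ι := ⟨(Classical.arbitrary {i // v i = true}).1⟩
      refine mul_le_mul_of_nonneg_left ?_ h.nonneg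
      norm_cast
      unfold wt
      rw [← Finset.card_map (Function.Embedding.subtype _)]
      refine Finset.card_le_card fun i hi => ?_
      simp only [Finset.mem_filter, Finset.mem_univ, true_and, cx, hP] at hi
      by_cases hv : v i = true
      · simp only [Finset.mem_map, Finset.mem_filter, Finset.mem_univ, true_and]
        exact ⟨⟨i, hv⟩, by simpa [hv, cx] using hi, rfl⟩
      · simp [hv] at hi
    · intro s
      ext i
      by_cases hv : v i = true <;> simp [hP, cx, hv, ones]

/-- Almost monotonicity of `a_n`, obtained by splitting `n` coordinates into the `m` residue
classes modulo `m`, each of size at most `n / m + 1`. -/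
lemma aConst_mul_le (hlam : 0 < lam)
    (hLip : ∀ G ∈ 𝓕, ∀ x y : G.X, dist (G.F x) (G.F y) ≤ lam * dist x y)
    {m n : ℕ} (hm : 0 < m) (hn : 0 < n) :
    aConst 𝓕 n * n ≤ aConst 𝓕 m * (n + m) := by
  have : Nonempty (Fin n) := ⟨⟨0, hn⟩⟩
  have : Nonempty (Fin m) := ⟨⟨0, hm⟩⟩
  have hn' : (0 : ℝ) < n := by exact_mod_cast hn
  have ham := aConst_nonneg 𝓕 m
  by_contra! hcon
  rw [← div_lt_iff₀ hn'] at hcon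
  obtain ⟨r, hr1, hr2⟩ := exists_between hcon
  have hr0 : 0 < r := lt_of_le_of_lt (by positivity) hr1
  obtain ⟨G, hG, f, C, hC, hf, hlt⟩ := exists_near_extremal (𝓕 := 𝓕) (ι := Fin n)
    hr0 (by rwa [Fintype.card_fin])
  rw [Fintype.card_fin] at hlt
  set p : Fin n → Fin m := fun i => ⟨i % m, Nat.mod_lt _ hm⟩ with hp
  have hfib : ∀ j, (univ.filter fun i => p i = j).card ≤ n / m + 1 := by
    intro j
    rw [← Finset.card_range (n / m + 1)]
    refine Finset.card_le_card_of_injOn (fun i : Fin n => (i : ℕ) / m) ?_ ?_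
    · intro i _
      simp only [Finset.coe_range, Set.mem_Iio]
      exact Nat.lt_succ_of_le (Nat.div_le_div_right i.2.le)
    · intro i hi i' hi' hii
      simp only [Finset.coe_filter, Finset.mem_univ, true_and, hp, Set.mem_ofPred_eq] at hi hi'
      have h1 : (i : ℕ) % m = (i' : ℕ) % m := by
        have := hi.trans hi'.symm
        simpa using this
      ext
      rw [← Nat.div_add_mod (i : ℕ) m, ← Nat.div_add_mod (i' : ℕ) m, h1]
      simp only at hii
      rw [hii]
  have hle : mdist (G.F ∘ f) (ones (Fin n)) ≤ aConst 𝓕 m * (C * (n / m + 1 : ℕ) * m) := by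
    rw [mdist_pull (G.F ∘ f) (ones (Fin n)) (fun s : Fin m → Bool => s ∘ p)]
    · refine Finset.expect_le univ_nonempty fun ε _ => ?_
      have := mdist_le_aConst hlam hLip hG (f := fun s : Fin m → Bool => f (cx ε (s ∘ p)))
        (C := C * (n / m + 1 : ℕ)) (by
          intro s s'
          refine (hf _ _).trans ?_
          rw [cx_translate, mul_assoc]
          refine mul_le_mul_of_nonneg_left ?_ hC.le
          exact_mod_cast wt_comp_le p _ hfib (cx s s'))
      rwa [Fintype.card_fin] at this
    · intro s; rfl
  have hB : ((n / m + 1 : ℕ) : ℝ) * m ≤ n + m := by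
    have := Nat.div_mul_le_self n m
    have : (n / m + 1) * m ≤ n + m := by rw [add_mul, one_mul]; omega
    exact_mod_cast this
  rw [div_lt_iff₀ hn'] at hr1
  have h1 : aConst 𝓕 m * (C * (n / m + 1 : ℕ) * m) ≤ aConst 𝓕 m * (n + m) * C := by
    calc _ = aConst 𝓕 m * (((n / m + 1 : ℕ) : ℝ) * m) * C := by ring
      _ ≤ _ := by gcongr
  have h2 := mul_lt_mul_of_pos_right hr1 hC
  nlinarith

lemma aConst_tendsto (hlam : 0 < lam)
    (hLip : ∀ G ∈ 𝓕, ∀ x y : G.X, dist (G.F x) (G.F y) ≤ lam * dist x y) :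
    Filter.Tendsto (fun n : ℕ => aConst 𝓕 n) Filter.atTop (nhds (⨅ m : ℕ, aConst 𝓕 (m + 1))) := by
  have hbdd : BddBelow (Set.range fun m : ℕ => aConst 𝓕 (m + 1)) :=
    ⟨0, by rintro _ ⟨m, rfl⟩; exact aConst_nonneg _ _⟩
  refine tendsto_order.2 ⟨fun a ha => ?_, fun a ha => ?_⟩
  · filter_upwards [Filter.eventually_ge_atTop 1] with n hn
    have := ciInf_le hbdd (n - 1)
    simp only [Nat.sub_add_cancel hn] at this
    exact ha.trans_le this
  · obtain ⟨m, hm⟩ := exists_lt_of_ciInf_lt ha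
    have ht : Filter.Tendsto (fun n : ℕ => aConst 𝓕 (m + 1) * (1 + ((m + 1 : ℕ) : ℝ) / n))
        Filter.atTop (nhds (aConst 𝓕 (m + 1) * (1 + 0))) :=
      ((tendsto_const_div_atTop_nhds_zero_nat _).const_add 1).const_mul _
    rw [add_zero, mul_one] at ht
    filter_upwards [ht.eventually (gt_mem_nhds hm), Filter.eventually_ge_atTop 1] with n h1 hn
    refine lt_of_le_of_lt ?_ h1
    have hn' : (0 : ℝ) < n := by exact_mod_cast hn
    have := aConst_mul_le hlam hLip (Nat.succ_pos m) hn
    rw [← le_div_iff₀ hn'] at this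
    refine this.trans (le_of_eq ?_)
    field_simp

end constants

/-! ### Embedded cubes -/

section embedding

/-- Vector in the cube over `κ × τ` which is `ω` on the slice `{j} × τ` and zero elsewhere. -/
def emb {κ τ : Type} [DecidableEq κ] (j : κ) (ω : τ → Bool) : κ × τ → Bool :=
  fun b => decide (b.1 = j) && ω b.2

lemma wt_emb {κ τ : Type} [Fintype κ] [Fintype τ] [DecidableEq κ] (j : κ) (ω : τ → Bool) :
    wt (emb j ω) = wt ω := by
  unfold wt
  have : (univ.filter fun b : κ × τ => emb j ω b = true)
      = ({j} : Finset κ) ×ˢ (univ.filter fun i => ω i = true) := by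
    ext ⟨a, b⟩; simp [emb, and_comm, @eq_comm _ a j]
  rw [this, Finset.card_product]; simp

lemma wt_fst {κ τ : Type} [Fintype κ] [Fintype τ] (s : κ → Bool) :
    wt (fun b : κ × τ => s b.1) = wt s * Fintype.card τ := by
  unfold wt
  have : (univ.filter fun b : κ × τ => s b.1 = true)
      = (univ.filter fun i => s i = true) ×ˢ (univ : Finset τ) := by
    ext ⟨a, b⟩; simp
  rw [this, Finset.card_product]; simp

/-- If `k` is large, every `C`-Lipschitz map on the cube over `β × Fin k` has a block subcube
over `β` on which all distances, in the source and in the target of `F`, are within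
`C * k * θ` of the corresponding mean displacements. -/
lemma exists_block_subcube {X Y : Type} [MetricSpace X] [MetricSpace Y] {F : X → Y} {lam : ℝ}
    (hlam : 0 < lam) (hF : ∀ x y, dist (F x) (F y) ≤ lam * dist x y)
    {β : Type} [Fintype β] [DecidableEq β] {k : ℕ} (hk0 : 0 < k) {θ : ℝ} (hθ : 0 < θ)
    (hk : 2 * (Fintype.card (β → Bool) : ℝ) ^ 2 * (Fintype.card β * (1 + lam) ^ 2) < k * θ ^ 2)
    {f : (β × Fin k → Bool) → X} {C : ℝ} (hC : 0 < C) (hf : LipC f C) :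
    ∃ g : (β → Bool) → X, ∀ σ τ,
      dist (g σ) (g τ) ≤ C * (wt (cx σ τ) * k) ∧
      |dist (g σ) (g τ) - mdist f (fun b => cx σ τ b.1)| ≤ C * k * θ ∧
      |dist (F (g σ)) (F (g τ)) - mdist (F ∘ f) (fun b => cx σ τ b.1)| ≤ C * k * θ := by
  have hk' : (0 : ℝ) < k := by exact_mod_cast hk0
  -- translation invariance identifies the means
  have hmean : ∀ {Z : Type} [MetricSpace Z] (φ : (β × Fin k → Bool) → Z) (σ τ : β → Bool),
      𝔼 ε, dist (φ (cx ε fun b => σ b.1)) (φ (cx ε fun b => τ b.1))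
        = mdist φ (fun b => cx σ τ b.1) := by
    intro Z _ φ σ τ
    unfold mdist
    rw [← expect_translate (fun b : β × Fin k => σ b.1)
      (fun ε => dist (φ ε) (φ (cx ε fun b => cx σ τ b.1)))]
    refine Finset.expect_congr rfl fun ε _ => ?_
    congr 2
    ext b
    simp [cx]
  have hdiff : ∀ {Z : Type} [MetricSpace Z] (φ : (β × Fin k → Bool) → Z) (K : ℝ) (_ : LipC φ K)
      (σ τ : β → Bool) (i : β × Fin k) (ε : β × Fin k → Bool),
      |dist (φ (cx (cx ε (single i)) fun b => σ b.1)) (φ (cx (cx ε (single i)) fun b => τ b.1))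
        - dist (φ (cx ε fun b => σ b.1)) (φ (cx ε fun b => τ b.1))| ≤ 2 * K := by
    intro Z _ φ K hφ σ τ i ε
    have hs : ∀ v, dist (φ (cx (cx ε (single i)) v)) (φ (cx ε v)) ≤ K := by
      intro v
      have := hφ (cx (cx ε (single i)) v) (cx ε v)
      have e : cx (cx (cx ε (single i)) v) (cx ε v) = single i := by
        ext j; cases h1 : ε j <;> cases h2 : v j <;> simp [cx, h1, h2]
      rw [e, wt_single] at this
      simpa using this
    rw [← Real.dist_eq]
    refine (dist_dist_dist_le _ _ _ _).trans ?_
    have h1 := hs fun b => σ b.1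
    have h2 := hs fun b => τ b.1
    linarith
  obtain ⟨ε, hε⟩ := exists_concentrated (ι := β × Fin k)
    (J := ((β → Bool) × (β → Bool)) ⊕ ((β → Bool) × (β → Bool)))
    (Sum.elim
      (fun p ε => dist (f (cx ε fun b => p.1 b.1)) (f (cx ε fun b => p.2 b.1)))
      (fun p ε => dist ((F ∘ f) (cx ε fun b => p.1 b.1)) ((F ∘ f) (cx ε fun b => p.2 b.1))))
    (2 * (C * (1 + lam))) (C * k * θ) (by positivity)
    (by
      rintro (p | p) i ε
      · refine (hdiff f C hf p.1 p.2 i ε).trans ?_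
        nlinarith [mul_pos hC hlam]
      · refine (hdiff (F ∘ f) (lam * C) (hf.map hlam hF) p.1 p.2 i ε).trans ?_
        nlinarith [mul_pos hC hlam])
    (by
      rw [Fintype.card_sum, Fintype.card_prod, Fintype.card_prod, Fintype.card_fin]
      push_cast
      have := mul_lt_mul_of_pos_right hk (show 0 < C ^ 2 * k by positivity)
      calc _ = 2 * (Fintype.card (β → Bool) : ℝ) ^ 2 * (Fintype.card β * (1 + lam) ^ 2)
            * (C ^ 2 * k) := by ring
        _ < _ := this
        _ = _ := by ring)
  refine ⟨fun σ => f (cx ε fun b => σ b.1), fun σ τ => ⟨?_, ?_, ?_⟩⟩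
  · refine (hf _ _).trans (le_of_eq ?_)
    rw [cx_translate]
    have := wt_fst (τ := Fin k) (cx σ τ)
    rw [Fintype.card_fin] at this
    rw [← Nat.cast_mul, ← this]; rfl
  · have := hε (Sum.inl (σ, τ))
    simp only [Sum.elim_inl] at this
    rwa [hmean f] at this
  · have := hε (Sum.inr (σ, τ))
    simp only [Sum.elim_inr] at this
    rwa [hmean (F ∘ f)] at this

variable {𝓕 : Set MetricMap} {lam : ℝ}

set_option maxHeartbeats 2000000 in
/-- Construction of the embedded cubes: `α = inf_n a_n` is itself an admissible constant in the
definition of factoring the Hamming cubes. -/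
lemma factors_of_inf (hlam : 0 < lam)
    (hLip : ∀ G ∈ 𝓕, ∀ x y : G.X, dist (G.F x) (G.F y) ≤ lam * dist x y)
    {α : ℝ} (hα : 0 < α) (hle : ∀ n, 0 < n → α ≤ aConst 𝓕 n)
    (hlim : Filter.Tendsto (fun n : ℕ => aConst 𝓕 n) Filter.atTop (nhds α))
    {D : ℝ} (hD : 1 < D) {m : ℕ} (hm : 0 < m) :
    ∃ G ∈ 𝓕, ∃ f : (Fin m → Bool) → G.X, ∃ a b : ℝ, 0 < a ∧ 0 < b ∧ a * α ≤ b ∧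
      ∀ ε δ : Fin m → Bool,
        a / D * hdist m ε δ ≤ dist (f ε) (f δ) ∧
        dist (f ε) (f δ) ≤ a * D * hdist m ε δ ∧
        b / D * hdist m ε δ ≤ dist (G.F (f ε)) (G.F (f δ)) ∧
        dist (G.F (f ε)) (G.F (f δ)) ≤ b * D * hdist m ε δ := by
  have hm' : (1 : ℝ) ≤ m := by exact_mod_cast hm
  have hD0 : 0 < D := by linarith
  have hev : ∀ ξ : ℝ, 0 < ξ → ∀ᶠ n in Filter.atTop, aConst 𝓕 n ≤ α * (1 + ξ) := by
    intro ξ hξ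
    refine (hlim.eventually (gt_mem_nhds (show α < α * (1 + ξ) by nlinarith))).mono ?_
    exact fun n hn => hn.le
  -- `η` is small compared with the smallest nonzero distance `1 / m`
  obtain ⟨η, hη0, hη⟩ : ∃ η : ℝ, 0 < η ∧ 5 * η * m ≤ 1 - 1 / D := by
    have : 1 / D < 1 := (div_lt_one hD0).2 hD
    refine ⟨(1 - 1 / D) / (5 * m), by apply div_pos <;> linarith, le_of_eq ?_⟩
    field_simp
  have hη1 : 5 * η < 1 := by
    have : 0 < 1 / D := by positivity
    nlinarith
  -- `q` superblocks, one of which will be almost isometric in the source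
  obtain ⟨q, hq, hqa⟩ := ((Filter.eventually_gt_atTop 0).and (hev η hη0)).exists
  have hq' : (1 : ℝ) ≤ q := by exact_mod_cast hq
  set ξ := η / q with hξdef
  have hξ0 : 0 < ξ := by positivity
  have hξq : ξ * q = η := by rw [hξdef]; field_simp
  have hξη : ξ ≤ η := by nlinarith
  set μ := min 1 α with hμdef
  have hμ0 : 0 < μ := lt_min one_pos hα
  have hμ1 : μ ≤ 1 := min_le_left _ _
  have hμα : μ ≤ α := min_le_right _ _
  -- `k` is so large that `a_t` is within `α * ξ` of `α` for `t ≥ k` and concentration holds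
  obtain ⟨k, hkall, hk0, hkbig⟩ : ∃ k : ℕ, (∀ t, k ≤ t → aConst 𝓕 t ≤ α * (1 + ξ)) ∧ 0 < k ∧
      2 * (Fintype.card (Fin q × Fin m → Bool) : ℝ) ^ 2 *
        (Fintype.card (Fin q × Fin m) * (1 + lam) ^ 2) < k * (m * η * μ) ^ 2 := by
    obtain ⟨k1, hk1⟩ := Filter.eventually_atTop.1 (hev ξ hξ0)
    have hpos : 0 < (m * η * μ) ^ 2 := by positivity
    obtain ⟨k2, hk2⟩ := exists_nat_gt (2 * (Fintype.card (Fin q × Fin m → Bool) : ℝ) ^ 2 *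
        (Fintype.card (Fin q × Fin m) * (1 + lam) ^ 2) / (m * η * μ) ^ 2)
    refine ⟨max k1 (max k2 1), fun t ht => hk1 t ((le_max_left _ _).trans ht), by simp, ?_⟩
    rw [div_lt_iff₀ hpos] at hk2
    refine hk2.trans_le (mul_le_mul_of_nonneg_right ?_ hpos.le)
    exact_mod_cast (le_max_left k2 1).trans (le_max_right _ _)
  have hk' : (0 : ℝ) < k := by exact_mod_cast hk0
  have : Nonempty (Fin q) := ⟨⟨0, hq⟩⟩
  have : Nonempty (Fin m) := ⟨⟨0, hm⟩⟩
  have : Nonempty (Fin k) := ⟨⟨0, hk0⟩⟩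
  obtain ⟨G, hG, f, C, hC, hf, hbig⟩ := exists_near_extremal (𝓕 := 𝓕)
    (ι := (Fin q × Fin m) × Fin k) (r := α * (1 - ξ)) (mul_pos hα (by linarith))
    (lt_of_lt_of_le (by nlinarith) (hle _ Fintype.card_pos))
  obtain ⟨g, hg⟩ := exists_block_subcube hlam (hLip G hG) hk0 (by positivity) hkbig hC hf
  have hcard : (Fintype.card ((Fin q × Fin m) × Fin k) : ℝ) = q * m * k := by simp
  rw [hcard] at hbig
  -- `U` is the scale of the embedded copy, `t` the concentration error
  set U := C * (m * k) with hU
  have hU0 : 0 < U := by positivity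
  set t := C * k * (m * η * μ) with ht
  have htU : t = U * η * μ := by rw [ht, hU]; ring
  have ht1 : t ≤ η * U := by
    have := mul_le_mul_of_nonneg_left hμ1 (mul_pos hU0 hη0).le
    linarith
  have ht2 : t ≤ η * α * U := by
    have := mul_le_mul_of_nonneg_left hμα (mul_pos hU0 hη0).le
    linarith
  set pb : (Fin q × Fin m → Bool) → ((Fin q × Fin m) × Fin k → Bool) := fun σ b => σ b.1 with hpb
  have wtpb : ∀ σ, wt (pb σ) = wt σ * k := by
    intro σ
    have := wt_fst (τ := Fin k) σ
    rwa [Fintype.card_fin] at this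
  have hbig' : α * (1 - ξ) * (q * U) < mdist (G.F ∘ f) (pb (ones _)) := by
    refine lt_of_eq_of_lt ?_ hbig
    rw [hU]; ring
  have hyup : ∀ σ, mdist (G.F ∘ f) (pb σ) ≤ α * (1 + ξ) * (C * (wt σ * k)) := by
    intro σ
    have h1 := mdist_le_aConst_wt hlam hLip hG hf (pb σ)
    rw [wtpb] at h1
    push_cast at h1
    refine h1.trans ?_
    rcases Nat.eq_zero_or_pos (wt σ) with h0 | h0
    · simp [h0]
    · exact mul_le_mul_of_nonneg_right (hkall _ (Nat.le_mul_of_pos_left k h0)) (by positivity)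
  -- some superblock has mean displacement almost as large as the Lipschitz bound permits
  obtain ⟨j, hj⟩ : ∃ j : Fin q, (1 - 4 * η) * U ≤ mdist f (pb (emb j (ones (Fin m)))) := by
    by_contra! hcon
    have hedge : LipC (fun s : Fin q → Bool => g (fun b => s b.1)) ((1 - 4 * η) * U + t) := by
      refine lipC_of_edges fun j s => ?_
      have h1 := (hg (fun b => s b.1) (fun b => cx s (single j) b.1)).2.1
      have e : cx (fun b : Fin q × Fin m => s b.1) (fun b => cx s (single j) b.1)
          = emb j (ones (Fin m)) := by
        ext b; simp [cx, emb, single, ones]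
      rw [e] at h1
      have h2 := (abs_le.1 h1).2
      have h3 := hcon j
      simp only [hpb] at h3
      linarith
    have h1 := mdist_le_aConst hlam hLip hG hedge
    rw [Fintype.card_fin] at h1
    have h2 : mdist (G.F ∘ f) (pb (ones _)) - t
        ≤ mdist (G.F ∘ fun s : Fin q → Bool => g (fun b => s b.1)) (ones (Fin q)) := by
      refine Finset.le_expect univ_nonempty fun s _ => ?_
      have h3 := (hg (fun b => s b.1) (fun b => cx s (ones _) b.1)).2.2
      have e : cx (fun b : Fin q × Fin m => s b.1) (fun b => cx s (ones _) b.1) = ones _ := by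
        ext b; simp [cx, ones]
      rw [e] at h3
      have h4 := (abs_le.1 h3).1
      simp only [hpb, Function.comp] at h4 ⊢
      linarith
    have hnn := hedge.nonneg
    have h3 : aConst 𝓕 q * (((1 - 4 * η) * U + t) * q)
        ≤ α * (1 + η) * ((1 - 3 * η) * U * q) := by
      refine mul_le_mul hqa ?_ (by positivity) (by positivity)
      refine mul_le_mul_of_nonneg_right ?_ (by positivity)
      linarith
    have hA : 0 < α * U := by positivity
    have hAq : α * U ≤ α * U * q := le_mul_of_one_le_right hA.le hq'
    have h4 : η * (α * U) ≤ η * (α * U * q) := mul_le_mul_of_nonneg_left hAq hη0.le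
    have h5 : ξ * (α * U * q) ≤ η * (α * U * q) :=
      mul_le_mul_of_nonneg_right hξη (by positivity)
    have h6 : 0 < η ^ 2 * (α * U * q) := by positivity
    linarith
  refine ⟨G, hG, fun ω => g (emb j ω), U, α * U, hU0, by positivity, (mul_comm _ _).le, ?_⟩
  intro ω ω'
  have hcx : cx (emb j ω) (emb j ω') = emb j (cx ω ω') := by
    ext b; by_cases hb : b.1 = j <;> simp [cx, emb, hb]
  obtain ⟨hx0, hx, hy⟩ := hg (emb j ω) (emb j ω')
  rw [hcx] at hx0 hx hy
  rw [hdist_eq]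
  set w := cx ω ω' with hw
  rw [wt_emb] at hx0
  set d : ℝ := (wt w : ℝ) / m with hd
  have hdU : C * (wt w * k) = U * d := by rw [hU, hd]; field_simp
  rcases Nat.eq_zero_or_pos (wt w) with h0 | h0
  · have e : ω = ω' := by
      have h2 := cx_cancel ω ω'
      rw [← hw, wt_eq_zero h0] at h2
      rw [← h2]; ext i; simp [cx]
    have hd0 : d = 0 := by rw [hd, h0]; simp
    simp [e, hd0]
  have hd1 : 1 ≤ d * m := by
    rw [hd, div_mul_cancel₀ _ (by positivity)]; exact_mod_cast h0
  have hd0 : 0 < d := by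
    rw [hd]; exact div_pos (by exact_mod_cast h0) (by linarith)
  have hdle : d ≤ 1 := by
    rw [hd]; refine div_le_one_of_le₀ ?_ (by positivity)
    have := wt_le w
    rw [Fintype.card_fin] at this
    exact_mod_cast this
  have hηd : 5 * η ≤ d * (1 - 1 / D) := by
    have : 5 * η * m ≤ d * m * (1 - 1 / D) := by
      refine hη.trans ?_
      have : 0 ≤ 1 - 1 / D := by
        have := (div_lt_one hD0).2 hD
        linarith
      exact le_mul_of_one_le_left this hd1
    have hm0 : (0 : ℝ) < m := by linarith
    refine le_of_mul_le_mul_right ?_ hm0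
    linarith
  have hDD : 1 - 1 / D ≤ D - 1 := by
    have : 1 / D * D = 1 := by field_simp
    have h1 : 0 < 1 / D := by positivity
    nlinarith only [this, hD, h1]
  have hηd2 : 5 * η ≤ d * (D - 1) := hηd.trans (mul_le_mul_of_nonneg_left hDD hd0.le)
  have hxl : U * (d - 5 * η) ≤ dist (g (emb j ω)) (g (emb j ω')) := by
    have h1 := mdist_sub f (pb (emb j (ones (Fin m)))) (pb (emb j w))
    have e : cx (pb (emb j (ones (Fin m)))) (pb (emb j w)) = pb (emb j (cx (ones _) w)) := by
      ext b; by_cases hb : b.1.1 = j <;> simp [cx, emb, hpb, hb]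
    rw [e] at h1
    have h2 := mdist_le hf (pb (emb j (cx (ones _) w)))
    rw [wtpb, wt_emb] at h2
    have h3 : ((wt (cx (ones (Fin m)) w) : ℕ) : ℝ) + wt w = m := by
      have := wt_compl w
      rw [Fintype.card_fin] at this
      exact_mod_cast this
    have h4 : C * ((wt (cx (ones (Fin m)) w) * k : ℕ) : ℝ) = U - U * d := by
      rw [← hdU, hU, ← h3]; push_cast; ring
    have h5 := (abs_le.1 hx).1
    simp only [hpb] at h1 h2 hj
    linarith
  have hyl : α * U * (d - 3 * η) ≤ dist (G.F (g (emb j ω))) (G.F (g (emb j ω'))) := by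
    have h1 := mdist_sub (G.F ∘ f) (pb (ones _)) (pb (emb j w))
    have e : cx (pb (ones _)) (pb (emb j w)) = pb (cx (ones _) (emb j w)) := rfl
    rw [e] at h1
    have h2 := hyup (cx (ones _) (emb j w))
    have h3 : ((wt (cx (ones _) (emb j w)) : ℕ) : ℝ) + wt w = q * m := by
      have := wt_compl (emb j w)
      rw [wt_emb] at this
      have h := congrArg (Nat.cast : ℕ → ℝ) this
      push_cast at h
      simpa using h
    have h4 : C * (wt (cx (ones _) (emb j w)) * k) = q * U - U * d := by
      rw [← hdU, hU, eq_sub_of_add_eq h3]; ring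
    rw [h4] at h2
    have h5 := (abs_le.1 hy).1
    have h6 : 0 ≤ α * ξ * U * d := by positivity
    have h7 : α * U * (ξ * q) = α * U * η := by rw [hξq]
    simp only [hpb] at h1 h2 hbig'
    linarith
  have hyu : dist (G.F (g (emb j ω))) (G.F (g (emb j ω'))) ≤ α * U * (d + 2 * η) := by
    have h2 := hyup (emb j w)
    rw [wt_emb, hdU] at h2
    have h5 := (abs_le.1 hy).2
    have h6 : α * U * (ξ * d) ≤ α * U * η := by
      refine mul_le_mul_of_nonneg_left ?_ (by positivity)
      exact (mul_le_of_le_one_right hξ0.le hdle).trans hξη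
    simp only [hpb] at h2
    linarith
  have hdD : d / D = d - d * (1 - 1 / D) := by ring
  refine ⟨?_, ?_, ?_, ?_⟩
  · calc U / D * d = U * (d / D) := by ring
      _ ≤ U * (d - 5 * η) := mul_le_mul_of_nonneg_left (by linarith) hU0.le
      _ ≤ _ := hxl
  · calc _ ≤ U * d := by rw [← hdU]; exact hx0
      _ ≤ U * D * d := by
        have := le_mul_of_one_le_left (mul_pos hU0 hd0).le hD.le
        linarith
  · calc α * U / D * d = α * U * (d / D) := by ring
      _ ≤ α * U * (d - 3 * η) := mul_le_mul_of_nonneg_left (by linarith) (by positivity)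
      _ ≤ _ := hyl
  · calc _ ≤ α * U * (d + 2 * η) := hyu
      _ ≤ α * U * (D * d) := mul_le_mul_of_nonneg_left (by linarith) (by positivity)
      _ = _ := by ring

/-- Every admissible constant for factoring is a lower bound for all `a_n`: test `a_n` on the
embeddings themselves. -/
lemma le_aConst_of_factors (hlam : 0 < lam)
    (hLip : ∀ G ∈ 𝓕, ∀ x y : G.X, dist (G.F x) (G.F y) ≤ lam * dist x y)
    {c : ℝ} {n : ℕ} (hn : 0 < n)
    (h : ∀ D : ℝ, 1 < D →
    ∃ G ∈ 𝓕, ∃ f : (Fin n → Bool) → G.X, ∃ a b : ℝ, 0 < a ∧ 0 < b ∧ a * c ≤ b ∧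
      ∀ ε δ : Fin n → Bool,
        a / D * hdist n ε δ ≤ dist (f ε) (f δ) ∧
        dist (f ε) (f δ) ≤ a * D * hdist n ε δ ∧
        b / D * hdist n ε δ ≤ dist (G.F (f ε)) (G.F (f δ)) ∧
        dist (G.F (f ε)) (G.F (f δ)) ≤ b * D * hdist n ε δ) : c ≤ aConst 𝓕 n := by
  have hn' : (0 : ℝ) < n := by exact_mod_cast hn
  have : Nonempty (Fin n) := ⟨⟨0, hn⟩⟩
  have key : ∀ D : ℝ, 1 < D → c ≤ aConst 𝓕 n * (D * D) := by
    intro D hD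
    have hD0 : 0 < D := by linarith
    obtain ⟨G, hG, f, a, b, ha, hb, hab, hall⟩ := h D hD
    have hl : LipC f (a * D / n) := by
      intro ε δ
      have := (hall ε δ).2.1
      rw [hdist_eq] at this
      exact this.trans (le_of_eq (by ring))
    have h1 := mdist_le_aConst hlam hLip hG hl
    rw [Fintype.card_fin, div_mul_cancel₀ _ hn'.ne'] at h1
    have h2 : b / D ≤ mdist (G.F ∘ f) (ones (Fin n)) := by
      refine Finset.le_expect univ_nonempty fun ε _ => ?_
      have := (hall ε (cx ε (ones _))).2.2.1
      rw [hdist_eq, cx_cancel_left, wt_ones, Fintype.card_fin, div_self hn'.ne', mul_one] at this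
      exact this
    have h3 : b ≤ aConst 𝓕 n * (a * D) * D := (div_le_iff₀ hD0).1 (h2.trans h1)
    have h4 : a * c ≤ a * (aConst 𝓕 n * (D * D)) := by
      calc _ ≤ _ := hab
        _ ≤ _ := h3
        _ = _ := by ring
    exact le_of_mul_le_mul_left h4 ha
  have hcont : Filter.Tendsto (fun D : ℝ => aConst 𝓕 n * (D * D)) (nhdsWithin 1 (Set.Ioi 1))
      (nhds (aConst 𝓕 n * (1 * 1))) := by
    refine Filter.Tendsto.mono_left ?_ nhdsWithin_le_nhds
    exact Continuous.tendsto (by fun_prop) 1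
  have := ge_of_tendsto hcont (Filter.eventually_of_mem self_mem_nhdsWithin key)
  simpa using this

end embedding

/-- `(iii) ⇒ (i)` with sharp constants: if `limsup_n a_n(𝓕) > 0` then `𝓕` factors the Hamming
cubes, and `c(𝓕) = lim_n a_n(𝓕)` (in particular the limit exists). -/
theorem factors_of_limsup_aConst_pos (𝓕 : Set MetricMap) (lam : ℝ) (hlam : 0 < lam)
    (hLip : ∀ G ∈ 𝓕, ∀ x y : G.X, dist (G.F x) (G.F y) ≤ lam * dist x y)
    (h : 0 < Filter.limsup (fun n : ℕ => aConst 𝓕 n) Filter.atTop) :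
    FactorsHammingCubes 𝓕 ∧
    Filter.Tendsto (fun n : ℕ => aConst 𝓕 (n + 1)) Filter.atTop (nhds (cConst 𝓕)) := by
  set α := ⨅ m : ℕ, aConst 𝓕 (m + 1) with hαdef
  have hlim : Filter.Tendsto (fun n : ℕ => aConst 𝓕 n) Filter.atTop (nhds α) :=
    aConst_tendsto hlam hLip
  have hα : 0 < α := by rwa [hlim.limsup_eq] at h
  have hle : ∀ n, 0 < n → α ≤ aConst 𝓕 n := by
    intro n hn
    have hbdd : BddBelow (Set.range fun m : ℕ => aConst 𝓕 (m + 1)) :=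
      ⟨0, by rintro _ ⟨m, rfl⟩; exact aConst_nonneg _ _⟩
    have := ciInf_le hbdd (n - 1)
    simpa only [Nat.sub_add_cancel hn] using this
  have hfac := fun (D : ℝ) (hD : 1 < D) (n : ℕ) (hn : 0 < n) =>
    factors_of_inf hlam hLip hα hle hlim hD hn
  refine ⟨⟨α, hα, hfac⟩, ?_⟩
  -- the supremum defining `c(𝓕)` is a maximum, attained at `α`
  have hc : cConst 𝓕 = α := by
    refine IsGreatest.csSup_eq ⟨⟨hα, hfac⟩, ?_⟩
    rintro c ⟨-, hcf⟩
    exact le_ciInf fun m => le_aConst_of_factors hlam hLip (Nat.succ_pos m)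
      fun D hD => hcf D hD (m + 1) (Nat.succ_pos m)
  rw [hc]
  exact hlim.comp (Filter.tendsto_add_atTop_nat 1)
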